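/- Let f : [0,∞) → ℝ be convex with f(1) = 0 and let G : [0,∞) → [0,∞) be increasing, convex, with G(0) = 0. Let 𝓜 be a finite set with |𝓜| ≥ 2, let p_M be the uniform pmf on 𝓜, let p_{M̂|M} be a channel from 𝓜 to 𝓜, and let ε = ∑_m p_M(m) ∑_{m̂ ≠ m} p_{M̂|M}(m̂|m) be the error probability. Then I_{G,f}(p_M, p_{M̂|M}) ≥ G( (1/|𝓜|)·f(|𝓜|(1−ε)) + ((|𝓜|−1)/|𝓜|)·f(|𝓜|ε/(|𝓜|−1)) ). -/

import Mathlib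

open scoped BigOperators

/-- A probability mass function on a finite type: nonnegative and summing to 1. -/
def IsPMF {X : Type*} [Fintype X] (p : X → ℝ) : Prop :=
  (∀ x, 0 ≤ p x) ∧ ∑ x, p x = 1

/-- Absolute continuity `p ≪ q`: `q x = 0` implies `p x = 0`. -/
def AbsCont {X : Type*} (p q : X → ℝ) : Prop :=
  ∀ x, q x = 0 → p x = 0

/-- The f-divergence `D_f(p‖q) = ∑_{x : q(x) > 0} q(x) f(p(x)/q(x))`. -/
noncomputable def fDiv {X : Type*} [Fintype X] (f : ℝ → ℝ) (p q : X → ℝ) : ℝ :=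
  ∑ x, if 0 < q x then q x * f (p x / q x) else 0

/-- The `(G,f)`-information `I_{G,f}(p_X, p_{Y|X})`: the infimum over output pmfs
`q_Y` (with `p_{Y|X=x} ≪ q_Y` for all `x`) of `∑_x p_X x • G (D_f(p_{Y|X=x}‖q_Y))`. -/
noncomputable def Igf {X Y : Type*} [Fintype X] [Fintype Y]
    (G f : ℝ → ℝ) (pX : X → ℝ) (W : X → Y → ℝ) : ℝ :=
  sInf {v : ℝ | ∃ qY : Y → ℝ, IsPMF qY ∧ (∀ x, AbsCont (W x) qY) ∧
    v = ∑ x, pX x * G (fDiv f (W x) qY)}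

/-!
By convexity of `G`, the average of `G (D_f(W x‖q))` is at least `G` of the average divergence,
which is the divergence of the joint law `pX x * W x y` from the product law `pX x * q y`. Data
processing through the event "the decoding succeeds" bounds it below by a binary divergence. The
success probability under the product law does not depend on `q`: the output then carries no
information on the input, so any decoder of a uniform message succeeds with probability `1 / |𝓜|`.
-/

section

variable {X Y Z : Type*} {f G : ℝ → ℝ}

/-- The law on `X × Y` of an input drawn from `pX` together with its output through the channel
`W`. The product law `pX × q` is the case of the constant channel `fun _ => q`. -/
def jointLaw (pX : X → ℝ) (W : X → Y → ℝ) (z : X × Y) : ℝ :=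
  pX z.1 * W z.1 z.2

theorem AbsCont.jointLaw {W V : X → Y → ℝ} (h : ∀ x, AbsCont (W x) (V x)) (pX : X → ℝ) :
    AbsCont (jointLaw pX W) (jointLaw pX V) := fun z hz =>
  (mul_eq_zero.mp hz).elim (mul_eq_zero_of_left · _) fun hV => mul_eq_zero_of_right _ (h z.1 z.2 hV)

variable [Fintype X]

/-- The law of `g x` when `x` is drawn from `p`. -/
def pushforward [DecidableEq Z] (g : X → Z) (p : X → ℝ) (z : Z) : ℝ :=
  ∑ x with g x = z, p x

theorem AbsCont.pushforward [DecidableEq Z] {p q : X → ℝ} (hq : ∀ x, 0 ≤ q x)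
    (hpq : AbsCont p q) (g : X → Z) : AbsCont (pushforward g p) (pushforward g q) := fun _ hz =>
  Finset.sum_eq_zero fun x hx =>
    hpq x ((Finset.sum_eq_zero_iff_of_nonneg fun x _ => hq x).mp hz x hx)

variable [Fintype Y] [Fintype Z]

/-- The error probability of list decoding: the probability that the input does not belong to the
list `S y` attached to the output `y`. Ordinary decoding is the case of singletons. -/
def errorProb [DecidableEq X] (pX : X → ℝ) (W : X → Y → ℝ) (S : Y → Finset X) : ℝ :=
  ∑ x, pX x * ∑ y with x ∉ S y, W x y

theorem errorProb_singleton [DecidableEq X] (pX : X → ℝ) (W : X → X → ℝ) :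
    errorProb pX W (fun y => {y}) = ∑ x, pX x * ∑ y with y ≠ x, W x y := by
  simp only [errorProb, Finset.mem_singleton, eq_comm, ne_eq]

theorem IsPMF.jointLaw {pX : X → ℝ} {W : X → Y → ℝ} (hpX : IsPMF pX) (hW : ∀ x, IsPMF (W x)) :
    IsPMF (jointLaw pX W) := by
  refine ⟨fun z => mul_nonneg (hpX.1 z.1) ((hW z.1).1 z.2), ?_⟩
  simp only [_root_.jointLaw, Fintype.sum_prod_type, ← Finset.mul_sum, (hW _).2, mul_one, hpX.2]

theorem IsPMF.pushforward [DecidableEq Z] {p : X → ℝ} (hp : IsPMF p) (g : X → Z) :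
    IsPMF (pushforward g p) :=
  ⟨fun _ => Finset.sum_nonneg fun x _ => hp.1 x, (Finset.sum_fiberwise _ g p).trans hp.2⟩

theorem isPMF_uniform [Nonempty X] : IsPMF fun _ : X => 1 / (Fintype.card X : ℝ) :=
  ⟨fun _ => by positivity, by simp⟩

/-- The generalized log-sum inequality. -/
theorem sum_mul_map_div_sum_le {ι : Type*} {s : Finset ι} {a w : ι → ℝ}
    (hf : ConvexOn ℝ (Set.Ici 0) f) (ha : ∀ i ∈ s, 0 ≤ a i) (hw : ∀ i ∈ s, 0 ≤ w i)
    (haw : ∀ i ∈ s, w i = 0 → a i = 0) :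
    (∑ i ∈ s, w i) * f ((∑ i ∈ s, a i) / ∑ i ∈ s, w i) ≤ ∑ i ∈ s, w i * f (a i / w i) := by
  obtain hsum | hsum := (Finset.sum_nonneg hw).eq_or_lt
  · have hzero := (Finset.sum_eq_zero_iff_of_nonneg hw).mp hsum.symm
    rw [← hsum, zero_mul, Finset.sum_eq_zero fun i hi => by rw [hzero i hi, zero_mul]]
  · have hmean : ∑ i ∈ s, w i * (a i / w i) = ∑ i ∈ s, a i :=
      Finset.sum_congr rfl fun i hi => mul_div_cancel_of_imp' (haw i hi)
    have hjensen := hf.map_centerMass_le hw hsum fun i hi => div_nonneg (ha i hi) (hw i hi)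
    simpa only [Finset.centerMass, smul_eq_mul, Function.comp_apply, hmean, inv_mul_eq_div,
      le_div_iff₀' hsum] using hjensen

theorem fDiv_eq_sum {q : X → ℝ} (hq : ∀ x, 0 ≤ q x) (f : ℝ → ℝ) (p : X → ℝ) :
    fDiv f p q = ∑ x, q x * f (p x / q x) := by
  refine Finset.sum_congr rfl fun x _ => ite_eq_left_iff.mpr fun hx => ?_
  rw [(hq x).antisymm' (not_lt.mp hx), zero_mul]

theorem fDiv_nonneg {p q : X → ℝ} (hf : ConvexOn ℝ (Set.Ici 0) f) (hf1 : f 1 = 0)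
    (hp : IsPMF p) (hq : IsPMF q) (hpq : AbsCont p q) : 0 ≤ fDiv f p q := by
  have hlogsum := sum_mul_map_div_sum_le hf (fun x (_ : x ∈ Finset.univ) => hp.1 x)
    (fun x _ => hq.1 x) fun x _ => hpq x
  rwa [hp.2, hq.2, div_one, hf1, mul_zero, ← fDiv_eq_sum hq.1] at hlogsum

theorem fDiv_pushforward_le [DecidableEq Z] {p q : X → ℝ} (hf : ConvexOn ℝ (Set.Ici 0) f)
    (hp : ∀ x, 0 ≤ p x) (hq : ∀ x, 0 ≤ q x) (hpq : AbsCont p q) (g : X → Z) :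
    fDiv f (pushforward g p) (pushforward g q) ≤ fDiv f p q := by
  have hgq (z : Z) : 0 ≤ pushforward g q z := Finset.sum_nonneg fun x _ => hq x
  rw [fDiv_eq_sum hgq, fDiv_eq_sum hq, ← Finset.sum_fiberwise _ g]
  exact Finset.sum_le_sum fun z _ => sum_mul_map_div_sum_le hf (fun x _ => hp x)
    (fun x _ => hq x) fun x _ => hpq x

theorem fDiv_jointLaw {pX : X → ℝ} (hpX : ∀ x, 0 ≤ pX x) (f : ℝ → ℝ) (W V : X → Y → ℝ) :
    fDiv f (jointLaw pX W) (jointLaw pX V) = ∑ x, pX x * fDiv f (W x) (V x) := by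
  simp only [fDiv, jointLaw, Fintype.sum_prod_type, Finset.mul_sum]
  refine Finset.sum_congr rfl fun x _ => Finset.sum_congr rfl fun y _ => ?_
  obtain hx | hx := (hpX x).eq_or_lt
  · simp [← hx]
  · simp only [mul_pos_iff_of_pos_left hx, mul_div_mul_left _ _ hx.ne', mul_ite, mul_zero,
      mul_assoc]

theorem exists_isPMF_forall_absCont {X : Type*} [Finite X] [Nonempty X] {W : X → Y → ℝ}
    (hW : ∀ x, IsPMF (W x)) : ∃ q, IsPMF q ∧ ∀ x, AbsCont (W x) q := by
  classical
  have := Fintype.ofFinite X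
  let joint := jointLaw (fun _ : X => 1 / (Fintype.card X : ℝ)) W
  have hjoint : IsPMF joint := isPMF_uniform.jointLaw hW
  refine ⟨pushforward Prod.snd joint, hjoint.pushforward _, fun x y hy => ?_⟩
  have hxy : joint (x, y) = 0 :=
    (Finset.sum_eq_zero_iff_of_nonneg fun z _ => hjoint.1 z).mp hy (x, y) (by simp)
  exact (mul_eq_zero.mp hxy).resolve_left (by positivity)

theorem le_Igf {pX : X → ℝ} {W : X → Y → ℝ} {b : ℝ} (hf : ConvexOn ℝ (Set.Ici 0) f)
    (hf1 : f 1 = 0) (hG : ConvexOn ℝ (Set.Ici 0) G) (hpX : IsPMF pX) (hW : ∀ x, IsPMF (W x))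
    (hb : ∀ q, IsPMF q → (∀ x, AbsCont (W x) q) →
      b ≤ G (fDiv f (jointLaw pX W) (jointLaw pX fun _ => q))) :
    b ≤ Igf G f pX W := by
  have : Nonempty X := by
    by_contra hX
    rw [not_nonempty_iff] at hX
    simpa using hpX.2
  obtain ⟨q₀, hq₀, hWq₀⟩ := exists_isPMF_forall_absCont hW
  refine le_csInf ⟨_, q₀, hq₀, hWq₀, rfl⟩ ?_
  rintro _ ⟨q, hq, hWq, rfl⟩
  calc b ≤ G (∑ x, pX x * fDiv f (W x) q) := fDiv_jointLaw hpX.1 f W _ ▸ hb q hq hWq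
    _ ≤ ∑ x, pX x * G (fDiv f (W x) q) :=
      hG.map_sum_le (fun x _ => hpX.1 x) hpX.2 fun x _ => fDiv_nonneg hf hf1 (hW x) hq (hWq x)

theorem fDiv_bool {p q : Bool → ℝ} (hp : IsPMF p) (hq : IsPMF q) (f : ℝ → ℝ) :
    fDiv f p q = q true * f ((1 - p false) / q true) +
      (1 - q true) * f (p false / (1 - q true)) := by
  have hp1 := hp.2
  have hq1 := hq.2
  rw [Fintype.sum_bool] at hp1 hq1
  rw [fDiv_eq_sum hq.1, Fintype.sum_bool, eq_sub_of_add_eq hp1, eq_sub_of_add_eq' hq1]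

theorem pushforward_mem_jointLaw_false [DecidableEq X] (pX : X → ℝ) (W : X → Y → ℝ)
    (S : Y → Finset X) :
    pushforward (fun z => decide (z.1 ∈ S z.2)) (jointLaw pX W) false = errorProb pX W S := by
  simp only [pushforward, jointLaw, errorProb, decide_eq_false_iff_not, Finset.sum_filter,
    Fintype.sum_prod_type, Finset.mul_sum, mul_ite, mul_zero]

theorem pushforward_mem_jointLaw_const_true [DecidableEq X] {pX : X → ℝ} {q : Y → ℝ}
    {S : Y → Finset X} {α : ℝ} (hq : IsPMF q) (hS : ∀ y, ∑ x ∈ S y, pX x = α) :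
    pushforward (fun z => decide (z.1 ∈ S z.2)) (jointLaw pX fun _ => q) true = α := by
  simp only [pushforward, jointLaw, decide_eq_true_eq, Finset.sum_filter,
    Fintype.sum_prod_type_right, Finset.sum_ite_mem, Finset.univ_inter, ← Finset.sum_mul, hS,
    ← Finset.mul_sum, hq.2, mul_one]

/-- When `α` is `0` or `1`, the quotient by zero is harmless: it comes with the factor `0`. -/
theorem Igf_fano_general [DecidableEq X] {pX : X → ℝ} {W : X → Y → ℝ} {S : Y → Finset X} {α : ℝ}
    (hf : ConvexOn ℝ (Set.Ici 0) f) (hf1 : f 1 = 0) (hGmono : MonotoneOn G (Set.Ici 0))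
    (hGconv : ConvexOn ℝ (Set.Ici 0) G) (hpX : IsPMF pX) (hW : ∀ x, IsPMF (W x))
    (hS : ∀ y, ∑ x ∈ S y, pX x = α) :
    G (α * f ((1 - errorProb pX W S) / α) + (1 - α) * f (errorProb pX W S / (1 - α))) ≤
      Igf G f pX W := by
  refine le_Igf hf hf1 hGconv hpX hW fun q hq hWq => ?_
  have hjoint := hpX.jointLaw hW
  have hprod := hpX.jointLaw fun _ => hq
  have hac := AbsCont.jointLaw hWq pX
  let success (z : X × Y) : Bool := decide (z.1 ∈ S z.2)
  have hbinary := fDiv_bool (hjoint.pushforward success) (hprod.pushforward success) f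
  rw [pushforward_mem_jointLaw_false, pushforward_mem_jointLaw_const_true hq hS] at hbinary
  have hprocess := fDiv_pushforward_le hf hjoint.1 hprod.1 hac success
  have hnonneg := fDiv_nonneg hf hf1 (hjoint.pushforward success) (hprod.pushforward success)
    (hac.pushforward hprod.1 success)
  exact hbinary ▸ hGmono hnonneg (hnonneg.trans hprocess) hprocess

end

/-- Fano-type inequality for `I_{G,f}`: with `M` uniform on a finite message set
of size at least 2 and error probability `ε`, the `(G,f)`-information between the
message and its estimate is at least
`G( (1/|𝓜|) f(|𝓜|(1-ε)) + ((|𝓜|-1)/|𝓜|) f(|𝓜|ε/(|𝓜|-1)) )`. -/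
theorem Igf_fano {M : Type*} [Fintype M] [DecidableEq M]
    (G f : ℝ → ℝ)
    (hf : ConvexOn ℝ (Set.Ici 0) f) (hf1 : f 1 = 0)
    (hGmono : StrictMonoOn G (Set.Ici 0)) (hGconv : ConvexOn ℝ (Set.Ici 0) G)
    (hG0 : G 0 = 0) (hGnonneg : ∀ x ∈ Set.Ici (0 : ℝ), 0 ≤ G x)
    (hM : 2 ≤ Fintype.card M)
    (pMhat : M → M → ℝ) (hp : ∀ m, IsPMF (pMhat m)) :
    let N : ℝ := Fintype.card M
    let pM : M → ℝ := fun _ => 1 / N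
    let ε : ℝ := ∑ m, pM m * ∑ m' ∈ Finset.univ.filter (fun m' => m' ≠ m), pMhat m m'
    Igf G f pM pMhat ≥
      G ((1 / N) * f (N * (1 - ε)) + ((N - 1) / N) * f (N * ε / (N - 1))) := by
  intro N pM ε
  have : Nonempty M := Fintype.card_pos_iff.mp (by omega)
  have hN : N ≠ 0 := Nat.cast_ne_zero.mpr Fintype.card_ne_zero
  simpa only [errorProb_singleton, one_sub_div hN, div_div_eq_mul_div, div_one, mul_comm N] using
    Igf_fano_general (pX := pM) (S := fun m => {m}) (α := 1 / N) hf hf1 hGmono.monotoneOn hGconv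
      isPMF_uniform hp fun m => Finset.sum_singleton pM m
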